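/- Let n = #{d ∈ 𝔽_q^* : Tr(d²) = 0} be the length of the code C_D with defining set D = {d ∈ 𝔽_q^* : Tr(d²) = 0}. If m is even, then (as complex numbers) n = p^{m−1} + p^{−1}(p−1)G − 1; if m is odd, then n = p^{m−1} − 1. -/

import Mathlib

open Finset
open scoped Classical

noncomputable section

/-- `ζ_p = exp(2πi/p)`. -/
def zeta (p : ℕ) : ℂ := Complex.exp (2 * Real.pi * Complex.I / p)

/-- The canonical additive character of `ℤ/p`: `χ̄₁(c) = ζ_p^c`. -/
def chiBar (p : ℕ) (c : ZMod p) : ℂ := zeta p ^ c.val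

/-- The quadratic character of `(ℤ/p)^*`, extended by `η̄(0) = 0`. -/
def etaBar (p : ℕ) (c : ZMod p) : ℂ :=
  if c = 0 then 0 else if IsSquare c then 1 else -1

/-- The quadratic character of `F^*`, extended by `η(0) = 0`. -/
def etaQ (F : Type) [Field F] (x : F) : ℂ :=
  if x = 0 then 0 else if IsSquare x then 1 else -1

/-- The absolute trace map from `F` to `ℤ/p`. -/
def Trq (p : ℕ) (F : Type) [Field F] [Algebra (ZMod p) F] (x : F) : ZMod p :=
  Algebra.trace (ZMod p) F x

/-- The canonical additive character of `F`: `χ₁(x) = ζ_p^{Tr x}`. -/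
def chiQ (p : ℕ) (F : Type) [Field F] [Algebra (ZMod p) F] (x : F) : ℂ :=
  chiBar p (Trq p F x)

/-- The quadratic Gauss sum `G` over `F`. -/
def GaussQ (p : ℕ) (F : Type) [Field F] [Fintype F] [Algebra (ZMod p) F] : ℂ :=
  ∑ x ∈ univ.filter (fun x : F => x ≠ 0), etaQ F x * chiQ p F x

/-- The quadratic Gauss sum `Ḡ` over `ℤ/p`. -/
def GaussP (p : ℕ) [NeZero p] : ℂ :=
  ∑ y ∈ univ.filter (fun y : ZMod p => y ≠ 0), etaBar p y * chiBar p y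

/-!
Let `ψ` be a nontrivial additive character of a finite field `K` of odd characteristic, and `ℓ` a
nonzero `K`-linear functional on an extension `F` of degree `m`. By orthogonality of characters,
`#K` times the number of `d : F` with `ℓ (d ^ 2) = 0` is `∑ y : K, ∑ d : F, ψ (y * ℓ (d ^ 2))`.
The term `y = 0` contributes `#F`; for `y ≠ 0` the inner sum is a quadratic exponential sum over
`F`, equal to `η y * G` with `η` the quadratic character of `F` and `G` its Gauss sum. Since `η` is
the quadratic character of `K` composed with the norm, its restriction to `K` is the `m`-th power
of the quadratic character of `K`: trivial for even `m`, and of sum zero for odd `m`.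
-/

lemma card_filter_ne_zero_and_add_one {α : Type*} [Fintype α] [Zero α] [DecidableEq α]
    (P : α → Prop) [DecidablePred P] (h0 : P 0) :
    #{a | a ≠ 0 ∧ P a} + 1 = #{a | P a} := by
  have herase : ({a | a ≠ 0 ∧ P a} : Finset α) = ({a | P a} : Finset α).erase 0 := by
    ext a
    simp
  rw [herase, card_erase_add_one (by simpa using h0)]

section AddChar

variable {K R : Type*} [CommRing R]

lemma card_mul_card_filter_eq_zero [IsDomain R] [CommRing K] [Fintype K] [DecidableEq K]
    {ι : Type*} [Fintype ι] {ψ : AddChar K R} (hψ : ψ.IsPrimitive) (f : ι → K) :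
    (Fintype.card K : R) * #{i | f i = 0} = ∑ y, ∑ i, ψ (y * f i) := by
  rw [sum_comm]
  simp [AddChar.sum_mulShift _ hψ, ← sum_filter, mul_comm]

lemma isPrimitive_compAddMonoidHom_of_ne_zero {F : Type*} [Field K] [Field F] [Algebra K F]
    {ψ : AddChar K R} (hψ : ψ ≠ 1) {ℓ : F →ₗ[K] K} (hℓ : ℓ ≠ 0) :
    (ψ.compAddMonoidHom ℓ.toAddMonoidHom).IsPrimitive := by
  refine AddChar.IsPrimitive.of_ne_one fun h ↦ hψ ?_
  ext c
  obtain ⟨x, rfl⟩ := LinearMap.surjective hℓ c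
  exact DFunLike.congr_fun h x

end AddChar

section GaussSum

variable {F R : Type*} [Field F] [Fintype F] [DecidableEq F] [CommRing R]

/-- The Gauss sum `∑ a, η a * ψ a` of the quadratic character `η` of `F` and an additive character
`ψ` of `F`, with `η` taken to have values in the target ring of `ψ`. -/
def quadraticGaussSum (ψ : AddChar F R) : R :=
  gaussSum ((quadraticChar F).ringHomComp (Int.castRingHom R)) ψ

lemma quadraticGaussSum_mulShift (ψ : AddChar F R) {b : F} (hb : b ≠ 0) :
    quadraticGaussSum (ψ.mulShift b) = quadraticChar F b * quadraticGaussSum ψ := by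
  have hinv := ((quadraticChar_isQuadratic F).comp (Int.castRingHom R)).inv
  have hshift := gaussSum_mulShift_eq
    ((quadraticChar F).ringHomComp (Int.castRingHom R)) ψ (Units.mk0 b hb)
  rwa [hinv] at hshift

lemma sum_comp_sq (hF : ringChar F ≠ 2) (f : F → R) :
    ∑ d, f (d ^ 2) = ∑ a, ((quadraticChar F a : R) + 1) * f a := by
  have hcard (a : F) : (#{d : F | d ^ 2 = a} : R) = quadraticChar F a + 1 := by
    have hcardInt : (#{d : F | d ^ 2 = a} : ℤ) = quadraticChar F a + 1 := by
      simpa using quadraticChar_card_sqrts hF a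
    exact_mod_cast congrArg (Int.cast : ℤ → R) hcardInt
  simp_rw [← hcard, ← nsmul_eq_mul, ← sum_const]
  rw [← sum_fiberwise univ (· ^ 2)]
  refine sum_congr rfl fun a _ ↦ sum_congr rfl fun d hd ↦ ?_
  rw [(mem_filter.mp hd).2]

lemma sum_addChar_mul_sq [IsDomain R] (hF : ringChar F ≠ 2) {ψ : AddChar F R}
    (hψ : ψ.IsPrimitive) {b : F} (hb : b ≠ 0) :
    ∑ d, ψ (b * d ^ 2) = quadraticChar F b * quadraticGaussSum ψ :=
  calc ∑ d, ψ (b * d ^ 2)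
    _ = quadraticGaussSum (ψ.mulShift b) + ∑ a, ψ.mulShift b a := by
      rw [sum_comp_sq hF (fun a ↦ ψ (b * a))]
      simp [add_mul, sum_add_distrib, quadraticGaussSum, gaussSum]
    _ = quadraticChar F b * quadraticGaussSum ψ := by
      rw [AddChar.sum_eq_zero_of_ne_one (hψ hb), add_zero, quadraticGaussSum_mulShift ψ hb]

end GaussSum

section Extension

variable {K F : Type*} [Field K] [Fintype K] [Field F] [Fintype F] [DecidableEq F] [Algebra K F]

lemma quadraticChar_norm [DecidableEq K] (hK : ringChar K ≠ 2) (x : F) :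
    quadraticChar K (Algebra.norm K x) = quadraticChar F x := by
  have hF : ringChar F ≠ 2 := Algebra.ringChar_eq K F ▸ hK
  have hexp : (Fintype.card F - 1) / (Fintype.card K - 1) * (Fintype.card K / 2) =
      Fintype.card F / 2 := by
    have hdvd : Fintype.card K - 1 ∣ Fintype.card F - 1 := by
      simpa [Module.card_eq_pow_finrank (K := K) (V := F)] using
        Nat.sub_dvd_pow_sub_pow (Fintype.card K) 1 (Module.finrank K F)
    have hKhalf : Fintype.card K / 2 * 2 = Fintype.card K - 1 := by
      have := FiniteField.odd_card_of_char_ne_two hK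
      omega
    have hFhalf : Fintype.card F / 2 * 2 = Fintype.card F - 1 := by
      have := FiniteField.odd_card_of_char_ne_two hF
      omega
    apply Nat.eq_of_mul_eq_mul_right two_pos
    rw [mul_assoc, hKhalf, hFhalf, Nat.div_mul_cancel hdvd]
  refine (quadraticChar_isQuadratic K).eq_of_eq_coe (quadraticChar_isQuadratic F) hF ?_
  rw [quadraticChar_eq_pow_of_char_ne_two' hF,
    ← map_intCast (algebraMap K F), quadraticChar_eq_pow_of_char_ne_two' hK, map_pow,
    FiniteField.algebraMap_norm_eq_pow, ← pow_mul]
  simp only [Nat.card_eq_fintype_card, hexp]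

lemma quadraticChar_algebraMap [DecidableEq K] (hK : ringChar K ≠ 2) (y : K) :
    quadraticChar F (algebraMap K F y) = (quadraticChar K ^ Module.finrank K F) y := by
  rw [← quadraticChar_norm hK, Algebra.norm_algebraMap, map_pow,
    MulChar.pow_apply' _ Module.finrank_pos.ne']

variable (F) in
lemma sum_quadraticChar_algebraMap_of_even (hK : ringChar K ≠ 2) (hm : Even (Module.finrank K F)) :
    ∑ y : K, quadraticChar F (algebraMap K F y) = Fintype.card K - 1 := by
  simp_rw [quadraticChar_algebraMap hK, (quadraticChar_isQuadratic K).pow_even hm]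
  rw [MulChar.sum_one_eq_card_units, Fintype.card_units, Nat.cast_pred Fintype.card_pos]

variable (F) in
lemma sum_quadraticChar_algebraMap_of_odd (hK : ringChar K ≠ 2) (hm : Odd (Module.finrank K F)) :
    ∑ y : K, quadraticChar F (algebraMap K F y) = 0 := by
  simp_rw [quadraticChar_algebraMap hK, (quadraticChar_isQuadratic K).pow_odd hm]
  exact quadraticChar_sum_zero hK

lemma card_mul_card_filter_apply_sq_eq_zero [DecidableEq K] {R : Type*} [CommRing R] [IsDomain R]
    (hK : ringChar K ≠ 2) {ψ : AddChar K R} (hψ : ψ ≠ 1) {ℓ : F →ₗ[K] K} (hℓ : ℓ ≠ 0) :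
    (Fintype.card K : R) * #{d | ℓ (d ^ 2) = 0} =
      Fintype.card F + ((∑ y : K, quadraticChar F (algebraMap K F y) : ℤ) : R) *
        quadraticGaussSum (ψ.compAddMonoidHom ℓ.toAddMonoidHom) := by
  set Ψ := ψ.compAddMonoidHom ℓ.toAddMonoidHom
  have hF : ringChar F ≠ 2 := Algebra.ringChar_eq K F ▸ hK
  have hinner (y : K) : ∑ d, ψ (y * ℓ (d ^ 2)) = (if y = 0 then (Fintype.card F : R) else 0) +
      quadraticChar F (algebraMap K F y) * quadraticGaussSum Ψ := by
    split_ifs with hy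
    · simp [hy]
    · rw [zero_add, ← sum_addChar_mul_sq hF (isPrimitive_compAddMonoidHom_of_ne_zero hψ hℓ)
        ((map_ne_zero (algebraMap K F)).mpr hy)]
      simp [← Algebra.smul_def]
  rw [card_mul_card_filter_eq_zero (AddChar.IsPrimitive.of_ne_one hψ)]
  simp_rw [hinner, sum_add_distrib, ← sum_mul]
  simp

theorem code_length_general [DecidableEq K] {L : Type*} [Field L] [CharZero L]
    (hK : ringChar K ≠ 2) {ψ : AddChar K L} (hψ : ψ ≠ 1) {ℓ : F →ₗ[K] K} (hℓ : ℓ ≠ 0) :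
    (Even (Module.finrank K F) →
      (#{d | d ≠ 0 ∧ ℓ (d ^ 2) = 0} : L) =
        (Fintype.card K : L) ^ ((Module.finrank K F : ℤ) - 1) +
          (Fintype.card K : L)⁻¹ * ((Fintype.card K : L) - 1) *
            quadraticGaussSum (ψ.compAddMonoidHom ℓ.toAddMonoidHom) - 1) ∧
    (Odd (Module.finrank K F) →
      (#{d | d ≠ 0 ∧ ℓ (d ^ 2) = 0} : L) =
        (Fintype.card K : L) ^ ((Module.finrank K F : ℤ) - 1) - 1) := by
  have hq : (Fintype.card K : L) ≠ 0 := Nat.cast_ne_zero.mpr Fintype.card_ne_zero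
  have hcount := card_mul_card_filter_apply_sq_eq_zero hK hψ hℓ
  rw [← card_filter_ne_zero_and_add_one _ (by simp), Nat.cast_add_one,
    Module.card_eq_pow_finrank (K := K) (V := F), Nat.cast_pow] at hcount
  rw [zpow_sub_one₀ hq, zpow_natCast]
  refine ⟨fun hm ↦ ?_, fun hm ↦ ?_⟩
  · rw [sum_quadraticChar_algebraMap_of_even F hK hm] at hcount
    push_cast at hcount
    field_simp
    linear_combination hcount
  · rw [sum_quadraticChar_algebraMap_of_odd F hK hm, Int.cast_zero, zero_mul, add_zero] at hcount
    field_simp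
    linear_combination hcount

end Extension

lemma finrank_eq_of_card_eq_pow {K V : Type*} [Field K] [Fintype K] [AddCommGroup V] [Module K V]
    [Fintype V] {m : ℕ} (hV : Fintype.card V = Fintype.card K ^ m) : Module.finrank K V = m := by
  rw [Module.card_eq_pow_finrank (K := K)] at hV
  exact Nat.pow_right_injective Fintype.one_lt_card hV

lemma stdAddChar_ne_one (N : ℕ) [NeZero N] [Nontrivial (ZMod N)] :
    (ZMod.stdAddChar : AddChar (ZMod N) ℂ) ≠ 1 := by
  simpa using ZMod.isPrimitive_stdAddChar N one_ne_zero

lemma etaQ_eq_quadraticChar (F : Type) [Field F] [Fintype F] (x : F) :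
    etaQ F x = quadraticChar F x := by
  rw [etaQ, quadraticChar_apply, quadraticCharFun]
  split_ifs <;> simp

lemma chiBar_eq_stdAddChar (p : ℕ) [NeZero p] (c : ZMod p) : chiBar p c = ZMod.stdAddChar c := by
  have hc : ((c.val : ℤ) : ZMod p) = c := by simp
  rw [chiBar, zeta, ← Complex.exp_nat_mul, ← congrArg ZMod.stdAddChar hc, ZMod.stdAddChar_coe]
  congr 1
  push_cast
  ring

lemma GaussQ_eq_quadraticGaussSum (p : ℕ) [NeZero p] (F : Type) [Field F] [Fintype F]
    [Algebra (ZMod p) F] :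
    GaussQ p F = quadraticGaussSum
      (ZMod.stdAddChar.compAddMonoidHom (Algebra.trace (ZMod p) F).toAddMonoidHom) := by
  rw [GaussQ, sum_filter]
  refine sum_congr rfl fun x _ ↦ ?_
  rw [etaQ_eq_quadraticChar, chiQ, chiBar_eq_stdAddChar]
  by_cases hx : x = 0 <;> simp [hx, Trq]

theorem code_length (p m : ℕ) [Fact (Nat.Prime p)] (hp : Odd p)
    (F : Type) [Field F] [Fintype F] [Algebra (ZMod p) F]
    (hm : 0 < m) (hq : Fintype.card F = p ^ m) :
    (Even m →
      (((univ.filter (fun d : F => d ≠ 0 ∧ Trq p F (d ^ 2) = 0)).card : ℕ) : ℂ) = (p : ℂ) ^ ((m : ℤ) - 1 : ℤ) + (p : ℂ)⁻¹ * ((p : ℂ) - 1) * GaussQ p F - 1) ∧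
    (Odd m →
      (((univ.filter (fun d : F => d ≠ 0 ∧ Trq p F (d ^ 2) = 0)).card : ℕ) : ℂ) = (p : ℂ) ^ ((m : ℤ) - 1 : ℤ) - 1) := by
  obtain rfl : Module.finrank (ZMod p) F = m := finrank_eq_of_card_eq_pow (by rwa [ZMod.card])
  have hchar : ringChar (ZMod p) ≠ 2 := by
    rw [ZMod.ringChar_zmod_n]
    exact hp.ne_two_of_dvd_nat dvd_rfl
  have hgeneral :=
    code_length_general hchar (stdAddChar_ne_one p) (Algebra.trace_ne_zero (ZMod p) F)
  rw [← GaussQ_eq_quadraticGaussSum, ZMod.card] at hgeneral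
  exact hgeneral
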